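/- Let G be a graph and C a circuit in G. If the contracted graph G/C admits a nowhere-zero 4-flow, then G admits a 4-flow f such that E(G) − E(C) ⊆ supp(f) and |E_{f=0}(C)| < (1/4)|E(C)|. (This confirms a conjecture of Fan.) -/

import Mathlib

/-- A finite multigraph: loops and multiple edges are allowed.  Each edge is
assigned its (unordered) pair of endpoints. -/
structure Multigraph where
  V : Type
  E : Type
  finV : Finite V
  finE : Finite E
  ends : E → Sym2 V

attribute [instance] Multigraph.finV Multigraph.finE

namespace Multigraph

/-- A walk of length `n`: a sequence of `n+1` vertices and `n` edges, each edge
joining consecutive vertices. -/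
structure Walk (G : Multigraph) (n : ℕ) where
  vtx : Fin (n + 1) → G.V
  edge : Fin n → G.E
  compat : ∀ i : Fin n, G.ends (edge i) = s(vtx i.castSucc, vtx i.succ)

variable (G : Multigraph)

/-- The degree of a vertex (a loop counts twice). -/
noncomputable def degree (v : G.V) : ℕ :=
  Nat.card {e : G.E // v ∈ G.ends e ∧ ¬ (G.ends e).IsDiag} +
    2 * Nat.card {e : G.E // G.ends e = s(v, v)}

/-- The degree of a vertex in the subgraph with edge set `S` (a loop counts twice). -/
noncomputable def degIn (S : Set G.E) (v : G.V) : ℕ :=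
  Nat.card {e : G.E // e ∈ S ∧ v ∈ G.ends e ∧ ¬ (G.ends e).IsDiag} +
    2 * Nat.card {e : G.E // e ∈ S ∧ G.ends e = s(v, v)}

/-- A cycle (identified with its edge set): every vertex has even degree. -/
def IsCycle (S : Set G.E) : Prop := ∀ v : G.V, Even (G.degIn S v)

/-- `u` is joined to `w` by a path using only edges in `S`. -/
def Reaches (S : Set G.E) (u w : G.V) : Prop :=
  Relation.ReflTransGen (fun a b => ∃ e ∈ S, G.ends e = s(a, b)) u w

/-- A circuit (identified with its edge set): a connected `2`-regular subgraph. -/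
def IsCircuit (S : Set G.E) : Prop :=
  S.Nonempty ∧
    (∀ v : G.V, (∃ e ∈ S, v ∈ G.ends e) → G.degIn S v = 2) ∧
    ∀ u w : G.V, (∃ e ∈ S, u ∈ G.ends e) → (∃ e ∈ S, w ∈ G.ends e) → G.Reaches S u w

/-- A `ℤ₂×ℤ₂`-flow: at every vertex the values on the incident edges sum to zero
(a loop contributes its value twice, hence zero). -/
def IsFlow (f : G.E → ZMod 2 × ZMod 2) : Prop :=
  ∀ v : G.V, ∑ᶠ e ∈ {e : G.E | v ∈ G.ends e ∧ ¬ (G.ends e).IsDiag}, f e = 0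

/-- The support of a flow. -/
def supp (f : G.E → ZMod 2 × ZMod 2) : Set G.E := {e | f e ≠ 0}

/-- Contraction of the edge set `C`: delete the edges of `C` and identify the
ends of each edge of `C`. -/
def contract (C : Set G.E) : Multigraph where
  V := Quot fun u w : G.V => ∃ e ∈ C, G.ends e = s(u, w)
  E := {e : G.E // e ∉ C}
  finV := Finite.of_surjective _ (Quot.mk_surjective)
  finE := inferInstance
  ends := fun e => (G.ends e.1).map (Quot.mk _)

/-- A path: all vertices distinct (hence all edges distinct, which we also require). -/
def Walk.IsPath {n : ℕ} (W : G.Walk n) : Prop :=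
  Function.Injective W.vtx ∧ Function.Injective W.edge

/-- A nontrivial path all of whose internal vertices have degree `2` in `G`. -/
def IsDeg2Path {n : ℕ} (W : G.Walk n) : Prop :=
  1 ≤ n ∧ W.IsPath G ∧ ∀ i : Fin (n + 1), 0 < i.val → i.val < n → G.degree (W.vtx i) = 2

/-- A thread of `G`: a maximal path all of whose internal vertices have degree `2`
in `G` (maximal: its edge set is not properly contained in the edge set of
another such path). -/
def IsThread {n : ℕ} (W : G.Walk n) : Prop :=
  G.IsDeg2Path W ∧ ∀ (m : ℕ) (Q : G.Walk m), G.IsDeg2Path Q →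
    Set.range W.edge ⊆ Set.range Q.edge → Set.range Q.edge = Set.range W.edge

/-- A cycle cover: a (multi)collection of cycles covering every edge. -/
def IsCycleCover (𝒞 : Multiset (Set G.E)) : Prop :=
  (∀ S ∈ 𝒞, G.IsCycle S) ∧ ∀ e : G.E, ∃ S ∈ 𝒞, e ∈ S

/-- The length of a cycle cover: the sum of the lengths of its cycles. -/
noncomputable def coverLength (𝒞 : Multiset (Set G.E)) : ℕ :=
  (𝒞.map Set.ncard).sum

/-- The minimum length of a cycle cover of `G`. -/
noncomputable def cc : ℕ :=
  sInf {L : ℕ | ∃ 𝒞 : Multiset (Set G.E), G.IsCycleCover 𝒞 ∧ G.coverLength 𝒞 = L}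

/-- `G` is bridgeless: the ends of each edge `e` are still joined after deleting `e`. -/
def Bridgeless : Prop :=
  ∀ (e : G.E) (u w : G.V), G.ends e = s(u, w) → G.Reaches {e}ᶜ u w

/-- The connected component of the subgraph with edge set `S` containing the edge `e₀`. -/
def component (S : Set G.E) (e₀ : G.E) : Set G.E :=
  {e ∈ S | ∃ u w : G.V, u ∈ G.ends e₀ ∧ w ∈ G.ends e ∧ G.Reaches S u w}

/-- `B` is a connected component of the subgraph with edge set `S`. -/
def IsComponent (S B : Set G.E) : Prop := ∃ e₀ ∈ S, B = G.component S e₀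

/-- A `k`-flow: an orientation `D` (given by the tail/head pair of each edge)
together with an integer-valued function `f` with `|f e| < k`, conserved at
every vertex. -/
def IsIntFlow (k : ℕ) (D : G.E → G.V × G.V) (f : G.E → ℤ) : Prop :=
  (∀ e : G.E, s((D e).1, (D e).2) = G.ends e) ∧
    (∀ e : G.E, |f e| < (k : ℤ)) ∧
    ∀ v : G.V, (∑ᶠ e ∈ {e : G.E | (D e).1 = v}, f e) =
      ∑ᶠ e ∈ {e : G.E | (D e).2 = v}, f e

end Multigraph

/-!
A `4`-flow is the same thing as a pair `(x, y)` of cycles modulo `2`, and it vanishes on an edge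
exactly when `x` and `y` both do. A nowhere-zero `4`-flow on `G/C` lifts to a pair that covers all
edges outside `C`, and this remains true after adding multiples of `C` to `x` and `y`. So it is
enough to find a pair covering the edges outside `C` whose four possible values are not equally
frequent along `C`.

Suppose that they always are. Then the signs `(-1) ^ x` have sum zero along `C`, for every such
pair. If two vertices of `C` are joined by a path in `supp y - C`, one can add to `x` the cycle
formed by this path and an arc of `C`; hence the signs also have sum zero on every class of edges of
`C` not separated by these paths. On each class `y` is constant, and the classes are pairwise
noncrossing. Read along `C`, the word in the free group on two generators whose letter at an edge is
the generator `y` with exponent `(-1) ^ x` is therefore trivial, for every pair.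

Now switch `y` along a path in `supp x - C` instead: this exchanges the two generators on an arc of
`C`. Since no nontrivial element of the free group is fixed by the exchange, the subword on this arc
is trivial too. As long as `x` changes inside a trivial subword, such a path starts at the change
and cuts off a shorter trivial subword. This ends with a trivial subword on which `x` is constant;
but its exponent sum is not zero.
-/

section ResiduesModTwo

theorem zmodTwo_eq_one_of_ne_zero {c : ZMod 2} (h : c ≠ 0) : c = 1 := Fin.eq_one_of_ne_zero c h

/-- The sign `(-1) ^ x` of a residue `x` modulo `2`. -/
def zmodSign (x : ZMod 2) : ℤ := if x = 0 then 1 else -1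

theorem zmodSign_add_one (x : ZMod 2) : zmodSign (x + 1) = -zmodSign x := by
  revert x; decide

theorem zmodSign_ne_zero (x : ZMod 2) : zmodSign x ≠ 0 := by
  revert x; decide

variable {ι : Type*}

theorem card_eq_card_add_card_zmodTwo (T : Finset ι) (X : ι → ZMod 2) :
    T.card = (T.filter (X · = 0)).card + (T.filter (X · = 1)).card :=
  (Finset.card_eq_sum_card_fiberwise fun t _ => Finset.mem_univ (X t)).trans (Fin.sum_univ_two _)

theorem sum_zmodSign_eq (T : Finset ι) (X : ι → ZMod 2) :
    ∑ t ∈ T, zmodSign (X t) = (T.filter (X · = 0)).card - (T.filter (X · = 1)).card := by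
  have hsign : ∀ c : ZMod 2, zmodSign c = (if c = 0 then 1 else 0) - if c = 1 then 1 else 0 := by
    decide
  simp only [Finset.card_filter, Nat.cast_sum, Nat.cast_ite, Nat.cast_one, Nat.cast_zero, hsign,
    Finset.sum_sub_distrib]

theorem exists_card_filter_lt_of_sum_zmodSign_ne_zero {T : Finset ι}
    {X Y : ι → ZMod 2} (h : ∑ t ∈ T, zmodSign (X t) ≠ 0) :
    ∃ p q, 4 * (T.filter fun t => X t = p ∧ Y t = q).card < T.card := by
  by_contra! hcard
  have hfiber (p : ZMod 2) : (T.filter (X · = p)).card =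
      (T.filter fun t => X t = p ∧ Y t = 0).card + (T.filter fun t => X t = p ∧ Y t = 1).card := by
    rw [card_eq_card_add_card_zmodTwo _ Y, Finset.filter_filter, Finset.filter_filter]
  have htotal := card_eq_card_add_card_zmodTwo T X
  rw [sum_zmodSign_eq] at h
  have h₀ := hfiber 0
  have h₁ := hfiber 1
  have h₀₀ := hcard 0 0
  have h₀₁ := hcard 0 1
  have h₁₀ := hcard 1 0
  have h₁₁ := hcard 1 1
  omega

end ResiduesModTwo

section Words

variable {H κ : Type*} [Group H]

/-- The product `g 0 * g 1 * ⋯ * g (n - 1)` of the first `n` letters of the infinite word `g`. -/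
def prefixProd (g : ℕ → H) (n : ℕ) : H := ((List.range n).map g).prod

@[simp]
theorem prefixProd_zero (g : ℕ → H) : prefixProd g 0 = 1 := rfl

theorem prefixProd_succ (g : ℕ → H) (n : ℕ) : prefixProd g (n + 1) = prefixProd g n * g n :=
  List.prod_range_succ g n

theorem map_inv_mul_prefixProd {H' : Type*} [Group H'] (φ : H →* H') {g : ℕ → H} {g' : ℕ → H'}
    {i j : ℕ} (hij : i ≤ j) (h : ∀ t, i ≤ t → t < j → g' t = φ (g t)) :
    (prefixProd g' i)⁻¹ * prefixProd g' j = φ ((prefixProd g i)⁻¹ * prefixProd g j) := by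
  induction j, hij using Nat.le_induction with
  | base => simp
  | succ j hij ih =>
    rw [prefixProd_succ, prefixProd_succ, ← mul_assoc, ← mul_assoc, map_mul,
      ih fun t ht htj => h t ht (htj.trans j.lt_succ_self), h j hij j.lt_succ_self]

/-- The sum of the exponents `ε t` at the positions `t ∈ [i, j)` carrying the label `l`. -/
def labelSum [DecidableEq κ] (k : ℕ → κ) (ε : ℕ → ℤ) (l : κ) (i j : ℕ) : ℤ :=
  ∑ t ∈ Finset.Ico i j with k t = l, ε t

/-- No two distinct labels of the word `k 0, …, k (N - 1)` alternate in the pattern `l l' l l'`. -/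
def IsNoncrossing (k : ℕ → κ) (N : ℕ) : Prop :=
  ∀ ⦃a b c d : ℕ⦄, a < b → b < c → c < d → d < N → k a = k c → k b = k d → k a = k b

variable [DecidableEq κ]

theorem labelSum_self (k : ℕ → κ) (ε : ℕ → ℤ) (l : κ) (i : ℕ) : labelSum k ε l i i = 0 := by
  simp [labelSum]

theorem labelSum_add_labelSum (k : ℕ → κ) (ε : ℕ → ℤ) (l : κ) {i m j : ℕ} (him : i ≤ m)
    (hmj : m ≤ j) : labelSum k ε l i m + labelSum k ε l m j = labelSum k ε l i j := by
  simp only [labelSum, Finset.sum_filter, Finset.sum_Ico_consecutive _ him hmj]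

theorem labelSum_succ (k : ℕ → κ) (ε : ℕ → ℤ) (l : κ) (i : ℕ) :
    labelSum k ε l i (i + 1) = if k i = l then ε i else 0 := by
  simp [labelSum, Finset.sum_filter]

theorem labelSum_eq_zero {k : ℕ → κ} {l : κ} {i j : ℕ} (ε : ℕ → ℤ)
    (h : ∀ t, i ≤ t → t < j → k t ≠ l) : labelSum k ε l i j = 0 := by
  rw [labelSum, Finset.filter_false_of_mem fun t ht => h t (Finset.mem_Ico.1 ht).1
    (Finset.mem_Ico.1 ht).2, Finset.sum_empty]

/-- Between two occurrences of the label `k p`, and outside them, a noncrossing word uses disjoint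
sets of other labels, so balance passes to the two halves. -/
theorem IsNoncrossing.labelSum_eq_zero_of_split {k : ℕ → κ} {N : ℕ} (hk : IsNoncrossing k N)
    {ε : ℕ → ℤ} {p s i j : ℕ} {l : κ} (hpi : p ≤ i) (his : i ≤ s) (hsj : s < j) (hjN : j ≤ N)
    (hs : k p = k s) (hl : l ≠ k p) (h : labelSum k ε l i j = 0) :
    labelSum k ε l i s = 0 ∧ labelSum k ε l (s + 1) j = 0 := by
  have hsum : labelSum k ε l i s + labelSum k ε l (s + 1) j = 0 := by
    rw [← h, ← labelSum_add_labelSum k ε l his hsj.le,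
      ← labelSum_add_labelSum k ε l s.le_succ hsj, labelSum_succ, if_neg (hs ▸ hl.symm), zero_add]
  by_cases hocc : ∃ t, i ≤ t ∧ t < s ∧ k t = l
  · obtain ⟨t, hit, hts, rfl⟩ := hocc
    have hpt : p < t := (hpi.trans hit).lt_of_ne fun hpt => hl (hpt ▸ rfl)
    have hright : labelSum k ε (k t) (s + 1) j = 0 := labelSum_eq_zero ε fun u hsu huj hut =>
      hl (hk hpt hts hsu (huj.trans_le hjN) hs hut.symm).symm
    exact ⟨by simpa [hright] using hsum, hright⟩
  · have hleft : labelSum k ε l i s = 0 := labelSum_eq_zero ε fun t hit hts htl =>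
      hocc ⟨t, hit, hts, htl⟩
    exact ⟨hleft, by simpa [hleft] using hsum⟩

theorem IsNoncrossing.prefixProd_eq_mul_zpow {k : ℕ → κ} {N : ℕ} (hk : IsNoncrossing k N)
    (x : κ → H) (ε : ℕ → ℤ) {p i j : ℕ} (hpi : p ≤ i) (hij : i ≤ j) (hjN : j ≤ N)
    (hbal : ∀ l, l ≠ k p → labelSum k ε l i j = 0) :
    prefixProd (fun t => x (k t) ^ ε t) j =
      prefixProd (fun t => x (k t) ^ ε t) i * x (k p) ^ labelSum k ε (k p) i j := by
  induction hn : j - i using Nat.strong_induction_on generalizing p i j with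
  | _ n ih =>
  obtain rfl | hlt := hij.eq_or_lt
  · rw [labelSum_self, zpow_zero, mul_one]
  wlog hocc : ∃ s, i ≤ s ∧ s < j ∧ k p = k s generalizing p
  · have hzero : ∀ l, labelSum k ε l i j = 0 := fun l => by
      by_cases hl : l = k p
      · exact hl ▸ labelSum_eq_zero ε fun t hit htj htp => hocc ⟨t, hit, htj, htp.symm⟩
      · exact hbal l hl
    rw [this le_rfl (fun l _ => hzero l) ⟨i, le_rfl, hlt, rfl⟩, hzero, hzero, zpow_zero, zpow_zero]
  obtain ⟨s, his, hsj, hs⟩ := hocc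
  have hsplit := fun l hl => hk.labelSum_eq_zero_of_split hpi his hsj hjN hs hl (hbal l hl)
  have hleft := ih (s - i) (by omega) hpi his (by omega) (fun l hl => (hsplit l hl).1) rfl
  have hright := ih (j - (s + 1)) (by omega) (by omega) hsj hjN (fun l hl => (hsplit l hl).2) rfl
  rw [hright, prefixProd_succ, hleft, ← hs, ← labelSum_add_labelSum k ε (k p) his hsj.le,
    ← labelSum_add_labelSum k ε (k p) s.le_succ hsj, labelSum_succ, if_pos hs.symm, zpow_add,
    zpow_add]
  simp only [mul_assoc]

theorem IsNoncrossing.prefixProd_eq_one {k : ℕ → κ} {N : ℕ} (hk : IsNoncrossing k N)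
    (x : κ → H) (ε : ℕ → ℤ) (hbal : ∀ l, labelSum k ε l 0 N = 0) :
    prefixProd (fun t => x (k t) ^ ε t) N = 1 := by
  rw [hk.prefixProd_eq_mul_zpow x ε le_rfl N.zero_le le_rfl fun l _ => hbal l, hbal,
    prefixProd_zero, zpow_zero, mul_one]

end Words

section FreeGroupWords

theorem prefixProd_eq_of_fixed {H : Type*} [Group H] (φ : H →* H) (hφ : ∀ w, φ w = w → w = 1)
    {g g' : ℕ → H} {t a b s : ℕ} (hta : t ≤ a) (hab : a ≤ b) (hbs : b ≤ s)
    (hleft : ∀ u, t ≤ u → u < a → g' u = g u) (hmid : ∀ u, a ≤ u → u < b → g' u = φ (g u))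
    (hright : ∀ u, b ≤ u → u < s → g' u = g u) (hg : prefixProd g t = prefixProd g s)
    (hg' : prefixProd g' t = prefixProd g' s) : prefixProd g a = prefixProd g b := by
  have hl := map_inv_mul_prefixProd (MonoidHom.id H) hta hleft
  have hm := map_inv_mul_prefixProd φ hab hmid
  have hr := map_inv_mul_prefixProd (MonoidHom.id H) hbs hright
  rw [MonoidHom.id_apply] at hl hr
  refine inv_mul_eq_one.1 (hφ _ (hm.symm.trans ?_))
  calc (prefixProd g' a)⁻¹ * prefixProd g' b
      = ((prefixProd g' t)⁻¹ * prefixProd g' a)⁻¹ * ((prefixProd g' b)⁻¹ * prefixProd g' s)⁻¹ := by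
        rw [hg']; group
    _ = ((prefixProd g t)⁻¹ * prefixProd g a)⁻¹ * ((prefixProd g b)⁻¹ * prefixProd g s)⁻¹ := by
        rw [hl, hr]
    _ = (prefixProd g a)⁻¹ * prefixProd g b := by rw [hg]; group

theorem freeGroup_eq_one_of_map_eq_self {α : Type*} {s : α → α} (hs : Function.Injective s)
    (hne : ∀ a, s a ≠ a) (w : FreeGroup α) (h : FreeGroup.map s w = w) : w = 1 := by
  classical
  have hreduced : FreeGroup.IsReduced (w.toWord.map fun p => (s p.1, p.2)) := by
    have hw := FreeGroup.isReduced_toWord (x := w)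
    unfold FreeGroup.IsReduced at hw ⊢
    rw [List.isChain_map]
    exact hw.imp fun a b hab h => hab (hs h)
  have hword : w.toWord.map (fun p => (s p.1, p.2)) = w.toWord := by
    conv_rhs => rw [← h, ← FreeGroup.mk_toWord (x := w), FreeGroup.map.mk, FreeGroup.toWord_mk]
    exact hreduced.reduce_eq.symm
  rw [← FreeGroup.toWord_eq_nil_iff]
  rcases hL : w.toWord with _ | ⟨a, L⟩
  · rfl
  · rw [hL, List.map_cons, List.cons.injEq] at hword
    exact absurd (congrArg Prod.fst hword.1) (hne _)

/-- The letter of the free group on two generators recording a position of the circuit with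
coordinates `(x, y)`: the second coordinate chooses the generator, the first one the exponent. -/
def pairLetter (x y : ZMod 2) : FreeGroup (ZMod 2) := FreeGroup.of y ^ zmodSign x

/-- The automorphism of the free group on `ZMod 2` exchanging the two generators. -/
def swapGenerators : FreeGroup (ZMod 2) →* FreeGroup (ZMod 2) := FreeGroup.map (· + 1)

theorem swapGenerators_pairLetter (x y : ZMod 2) :
    swapGenerators (pairLetter x y) = pairLetter x (y + 1) := by
  rw [swapGenerators, pairLetter, map_zpow, FreeGroup.map.of, pairLetter]

theorem eq_one_of_swapGenerators_eq_self (w : FreeGroup (ZMod 2)) (h : swapGenerators w = w) :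
    w = 1 :=
  freeGroup_eq_one_of_map_eq_self (add_left_injective 1) (by decide) w h

theorem prefixProd_pairLetter_ne_of_const {X Y : ℕ → ZMod 2} {c : ZMod 2} {t s : ℕ} (hts : t < s)
    (hX : ∀ u, t ≤ u → u < s → X u = c) :
    prefixProd (fun u => pairLetter (X u) (Y u)) t ≠
      prefixProd (fun u => pairLetter (X u) (Y u)) s := by
  intro heq
  let exponentSum : FreeGroup (ZMod 2) →* Multiplicative ℤ :=
    FreeGroup.lift fun _ => Multiplicative.ofAdd 1
  have hexp := map_inv_mul_prefixProd exponentSum (g := fun u => pairLetter (X u) (Y u))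
    (g' := fun _ => Multiplicative.ofAdd (zmodSign c)) hts.le
    fun u htu hus => by simp [exponentSum, pairLetter, hX u htu hus, ← ofAdd_zsmul]
  simp only [heq, inv_mul_cancel, map_one, inv_mul_eq_one] at hexp
  have hpow : t = s ∨ zmodSign c = 0 := by
    simpa [prefixProd] using congrArg Multiplicative.toAdd hexp
  exact hpow.elim hts.ne (zmodSign_ne_zero c)

end FreeGroupWords

section Switching

variable {F : Type*} {N : ℕ} {X Y : F → ℕ → ZMod 2} {R : F → ℕ → ℕ → Prop}

/-- An abstraction of switching along a circuit with `N` positions. The configurations `f : F`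
assign to each position `t` the pair of coordinates `(X f t, Y f t)`, and `R f i j` says that the
positions `i` and `j` are joined off the circuit: the first coordinate can then be switched on the
arc `[i, j)`. The second coordinate is controlled by the cut at an arc with no such connection to
its complement. -/
structure IsSwitching (N : ℕ) (X Y : F → ℕ → ZMod 2) (R : F → ℕ → ℕ → Prop) : Prop where
  symm : ∀ ⦃f i j⦄, R f i j → R f j i
  exists_flip : ∀ ⦃f i j⦄, i < j → j < N → R f i j → ∃ f', R f' = R f ∧ Y f' = Y f ∧
    ∀ t < N, X f' t = X f t + if i ≤ t ∧ t < j then 1 else 0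
  eq_of_separated : ∀ ⦃f i j⦄, i < j → j < N →
    (∀ t s, i < t → t ≤ j → s < N → (s ≤ i ∨ j < s) → ¬R f t s) → Y f i = Y f j

/-- The chord `p` joins two positions on different sides of the edge at position `t`. -/
def ChordCovers (p : ℕ × ℕ) (t : ℕ) : Prop := p.1 ≤ t ∧ t < p.2

open Classical in
/-- The pairs of related positions among the first `N`, each listed in increasing order. -/
noncomputable def chords (N : ℕ) (r : ℕ → ℕ → Prop) : Finset (ℕ × ℕ) :=
  {p ∈ Finset.range N ×ˢ Finset.range N | p.1 < p.2 ∧ r p.1 p.2}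

theorem mem_chords {r : ℕ → ℕ → Prop} {p : ℕ × ℕ} :
    p ∈ chords N r ↔ p.1 < p.2 ∧ p.2 < N ∧ r p.1 p.2 := by
  simp only [chords, Finset.mem_filter, Finset.mem_product, Finset.mem_range]
  exact ⟨fun h => ⟨h.2.1, h.1.2, h.2.2⟩, fun h => ⟨⟨h.1.trans h.2.1, h.2.1⟩, h.1, h.2.2⟩⟩

open Classical in
/-- The chords of `r` covering the position `t`. -/
noncomputable def coveringChords (N : ℕ) (r : ℕ → ℕ → Prop) (t : ℕ) : Finset (ℕ × ℕ) :=
  {p ∈ chords N r | ChordCovers p t}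

theorem mem_coveringChords {r : ℕ → ℕ → Prop} {t : ℕ} {p : ℕ × ℕ} :
    p ∈ coveringChords N r t ↔ p ∈ chords N r ∧ ChordCovers p t := by
  simp [coveringChords]

theorem coveringChords_eq_iff {r : ℕ → ℕ → Prop} {t s : ℕ} :
    coveringChords N r t = coveringChords N r s ↔
      ∀ p ∈ chords N r, (ChordCovers p t ↔ ChordCovers p s) := by
  simp only [Finset.ext_iff, mem_coveringChords, and_congr_right_iff]

theorem isNoncrossing_coveringChords (r : ℕ → ℕ → Prop) :
    IsNoncrossing (coveringChords N r) N := by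
  intro a b c d hab hbc hcd _ hac hbd
  rw [coveringChords_eq_iff] at hac hbd ⊢
  intro p hp
  have hpac := hac p hp
  have hpbd := hbd p hp
  simp only [ChordCovers] at hpac hpbd ⊢
  omega

namespace IsSwitching

theorem snd_eq_of_coveringChords_eq (h : IsSwitching N X Y R) {f : F} {t s : ℕ} (htN : t < N)
    (hsN : s < N) (hts : coveringChords N (R f) t = coveringChords N (R f) s) :
    Y f t = Y f s := by
  wlog hlt : t < s generalizing t s
  · obtain rfl | hst := (not_lt.1 hlt).eq_or_lt
    · rfl
    · exact (this hsN htN hts.symm hst).symm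
  rw [coveringChords_eq_iff] at hts
  refine h.eq_of_separated hlt hsN fun u v htu hus hvN hv huv => ?_
  rcases hv with hvt | hsv
  · have hcov := hts (v, u) (mem_chords.2 ⟨by omega, by omega, h.symm huv⟩)
    simp only [ChordCovers] at hcov
    omega
  · have hcov := hts (u, v) (mem_chords.2 ⟨by omega, hvN, huv⟩)
    simp only [ChordCovers] at hcov
    omega

open Classical in
/-- Switching along a chord `p` negates the signs under `p` and keeps the others, so a balanced
class splits into two balanced halves. -/
theorem sum_zmodSign_chordClass_eq_zero (h : IsSwitching N X Y R)
    (hbal : ∀ f, ∑ t ∈ Finset.range N, zmodSign (X f t) = 0) (t₀ : ℕ) {J : Finset (ℕ × ℕ)} :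
    ∀ {f : F}, J ⊆ chords N (R f) → ∑ t ∈ Finset.range N with
      (∀ p ∈ J, (ChordCovers p t ↔ ChordCovers p t₀)), zmodSign (X f t) = 0 := by
  induction J using Finset.induction_on with
  | empty => exact fun {f} _ => by simpa using hbal f
  | insert p J _ ih =>
    intro f hpJ
    obtain ⟨hp, hJ⟩ := Finset.insert_subset_iff.1 hpJ
    obtain ⟨hlt, hpN, hR⟩ := mem_chords.1 hp
    obtain ⟨f', hRf', -, hflip⟩ := h.exists_flip hlt hpN hR
    set T := {t ∈ Finset.range N | ∀ q ∈ J, (ChordCovers q t ↔ ChordCovers q t₀)} with hT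
    have hsum : ∑ t ∈ T with ChordCovers p t, zmodSign (X f t) +
        ∑ t ∈ T with ¬ChordCovers p t, zmodSign (X f t) = 0 := by
      rw [Finset.sum_filter_add_sum_filter_not, ih hJ]
    have hsum' : -∑ t ∈ T with ChordCovers p t, zmodSign (X f t) +
        ∑ t ∈ T with ¬ChordCovers p t, zmodSign (X f t) = 0 := by
      rw [← ih (f := f') (hRf' ▸ hJ),
        ← Finset.sum_filter_add_sum_filter_not T (ChordCovers p), ← Finset.sum_neg_distrib]
      refine congrArg₂ _ (Finset.sum_congr rfl fun t ht => ?_) (Finset.sum_congr rfl fun t ht => ?_)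
        <;> obtain ⟨htT, htp⟩ := Finset.mem_filter.1 ht
        <;> rw [hflip t (Finset.mem_range.1 (Finset.mem_filter.1 htT).1)]
      · rw [if_pos (c := p.1 ≤ t ∧ t < p.2) htp, zmodSign_add_one]
      · rw [if_neg (c := p.1 ≤ t ∧ t < p.2) htp, add_zero]
    have hfilter : Finset.filter (fun t => ∀ q ∈ insert p J, (ChordCovers q t ↔ ChordCovers q t₀))
        (Finset.range N) = {t ∈ T | ChordCovers p t ↔ ChordCovers p t₀} := by
      ext t
      simp only [hT, Finset.mem_filter, Finset.forall_mem_insert]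
      tauto
    rw [hfilter]
    by_cases hp₀ : ChordCovers p t₀
    · simp only [hp₀, iff_true]; linarith
    · simp only [hp₀, iff_false]; linarith

theorem prefixProd_eq_one (h : IsSwitching N X Y R)
    (hbal : ∀ f, ∑ t ∈ Finset.range N, zmodSign (X f t) = 0) (f : F) :
    prefixProd (fun t => pairLetter (X f t) (Y f t)) N = 1 := by
  classical
  let k (t : ℕ) : Finset (ℕ × ℕ) × ZMod 2 := (coveringChords N (R f) t, Y f t)
  have hlabel : ∀ t < N, ∀ s < N, (k t = k s ↔
      coveringChords N (R f) t = coveringChords N (R f) s) := fun t ht s hs =>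
    ⟨congrArg Prod.fst, fun hts => Prod.ext hts (h.snd_eq_of_coveringChords_eq ht hs hts)⟩
  have hk : IsNoncrossing k N := fun a b c d hab hbc hcd hdN hac hbd =>
    (hlabel a (by omega) b (by omega)).2 <| isNoncrossing_coveringChords (R f) hab hbc hcd hdN
      (congrArg Prod.fst hac) (congrArg Prod.fst hbd)
  refine hk.prefixProd_eq_one (fun l => FreeGroup.of l.2) (fun t => zmodSign (X f t)) fun l => ?_
  by_cases hl : ∃ t₀ < N, k t₀ = l
  · obtain ⟨t₀, ht₀, rfl⟩ := hl
    rw [← h.sum_zmodSign_chordClass_eq_zero hbal t₀ (Finset.Subset.refl (chords N (R f))),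
      labelSum, ← Finset.range_eq_Ico]
    refine Finset.sum_congr (Finset.filter_congr fun t ht => ?_) fun _ _ => rfl
    rw [hlabel t (Finset.mem_range.1 ht) t₀ ht₀, coveringChords_eq_iff]
  · exact labelSum_eq_zero _ fun t _ htN htl => hl ⟨t, htN, htl⟩

end IsSwitching

/-- The word of `f`, and that of every configuration with the same relation, takes the same value
in the free group at the positions `t` and `s`. Unlike equality of the two values for `f` alone,
this passes to smaller arcs (`IsReturn.inter`). -/
def IsReturn (X Y : F → ℕ → ZMod 2) (R : F → ℕ → ℕ → Prop) (f : F) (t s : ℕ) : Prop :=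
  ∀ f', R f' = R f → prefixProd (fun u => pairLetter (X f' u) (Y f' u)) t =
    prefixProd (fun u => pairLetter (X f' u) (Y f' u)) s

/-- Switching the second coordinate along the chord `(i, j)` exchanges the two generators on the
intersection of `[t, s)` with `[i, j)`. The word still returns, so the subword on the intersection
is fixed by the exchange, hence trivial. -/
theorem IsReturn.inter (h : IsSwitching N Y X R) {f : F} {t s i j : ℕ}
    (hret : IsReturn X Y R f t s) (hsN : s ≤ N) (hij : i < j) (hjN : j < N) (hR : R f i j)
    (hle : max t i ≤ min s j) : IsReturn X Y R f (max t i) (min s j) := by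
  intro f₁ hf₁
  obtain ⟨f₂, hRf₂, hX, hY⟩ := h.exists_flip (f := f₁) hij hjN (hf₁ ▸ hR)
  refine prefixProd_eq_of_fixed swapGenerators eq_one_of_swapGenerators_eq_self
    (le_max_left t i) hle (min_le_left s j) ?_ ?_ ?_ (hret f₁ hf₁) (hret f₂ (hRf₂.trans hf₁))
  · intro u htu hu
    rw [hX, hY u (by omega), if_neg (by omega), add_zero]
  · intro u htu hu
    rw [hX, hY u (by omega), if_pos (by omega), swapGenerators_pairLetter]
  · intro u htu hu
    rw [hX, hY u (by omega), if_neg (by omega), add_zero]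

/-- The word moves on unless the first coordinate changes inside `[t, s)`; a change is caused by a
chord, which cuts off a shorter return. -/
theorem IsSwitching.not_isReturn (h : IsSwitching N Y X R) {f : F} {t s : ℕ} (hts : t < s)
    (hsN : s ≤ N) : ¬IsReturn X Y R f t s := by
  induction hn : s - t using Nat.strong_induction_on generalizing t s with
  | _ n ih =>
  intro hret
  obtain ⟨q, htq, hqs, hchange⟩ : ∃ q, t ≤ q ∧ q + 1 < s ∧ X f q ≠ X f (q + 1) := by
    by_contra! hconst
    refine prefixProd_pairLetter_ne_of_const (c := X f t) hts (fun u htu => ?_) (hret f rfl)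
    induction u, htu using Nat.le_induction with
    | base => exact fun _ => rfl
    | succ u htu ihu => exact fun hus => (hconst u htu hus) ▸ ihu (by omega)
  obtain ⟨v, hvN, hv, hR⟩ : ∃ v < N, (v ≤ q ∨ q + 1 < v) ∧ R f (q + 1) v := by
    by_contra! hsep
    refine hchange (h.eq_of_separated q.lt_succ_self (by omega) fun u v hqu huq hvN hv => ?_)
    obtain rfl : u = q + 1 := by omega
    exact hsep v hvN hv
  rcases hv with hvq | hqv
  · exact ih (min s (q + 1) - max t v) (by omega) (by omega) (by omega) rfl
      (hret.inter h hsN (by omega) (by omega) (h.symm hR) (by omega))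
  · exact ih (min s v - max t (q + 1)) (by omega) (by omega) (by omega) rfl
      (hret.inter h hsN hqv hvN hR (by omega))

theorem IsSwitching.exists_sum_zmodSign_ne_zero [Nonempty F] {R₁ R₂ : F → ℕ → ℕ → Prop}
    (h₁ : IsSwitching N X Y R₁) (h₂ : IsSwitching N Y X R₂) (hN : 0 < N) :
    ∃ f, ∑ t ∈ Finset.range N, zmodSign (X f t) ≠ 0 := by
  by_contra! hbal
  exact h₂.not_isReturn (f := Classical.arbitrary F) hN le_rfl fun f _ =>
    (h₁.prefixProd_eq_one hbal f).symm

end Switching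

section Boundary

open Finsupp (single)

/-- The boundary `a + b` of an edge with ends `a` and `b`, as a chain modulo `2`. -/
noncomputable def edgeBoundary {α : Type*} (z : Sym2 α) : α →₀ ZMod 2 :=
  Sym2.lift ⟨fun a b => single a 1 + single b 1, fun _ _ => add_comm _ _⟩ z

/-- The integral boundary `a - b` of an edge directed from `a` to `b`. -/
noncomputable def arcBoundary {α : Type*} (p : α × α) : α →₀ ℤ := single p.1 1 - single p.2 1

variable {α E : Type*}

@[simp]
theorem edgeBoundary_mk (a b : α) : edgeBoundary s(a, b) = single a 1 + single b 1 := rfl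

theorem edgeBoundary_diag (a : α) : edgeBoundary s(a, a) = 0 := ZModModule.add_self _

theorem edgeBoundary_add_edgeBoundary (a b c : α) :
    edgeBoundary s(a, b) + edgeBoundary s(a, c) = edgeBoundary s(b, c) := by
  simp only [edgeBoundary_mk]
  rw [add_add_add_comm, ZModModule.add_self, zero_add]

theorem edgeBoundary_map {β : Type*} (φ : α → β) (z : Sym2 α) :
    edgeBoundary (z.map φ) = Finsupp.mapDomain φ (edgeBoundary z) := by
  induction z with
  | _ a b => simp [Finsupp.mapDomain_add, Finsupp.mapDomain_single]

theorem exists_eq_of_edgeBoundary_apply_ne_zero {z : Sym2 α} {a : α} (h : edgeBoundary z a ≠ 0) :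
    ∃ b, z = s(a, b) := by
  classical
  induction z with
  | _ b c =>
    by_contra! hne
    refine h ?_
    have hb : b ≠ a := fun hb => hne c (hb ▸ rfl)
    have hc : c ≠ a := fun hc => hne b (hc ▸ Sym2.eq_swap)
    simp [hb, hc]

theorem exists_other_of_sum_edgeBoundary_eq_zero {ends : E → Sym2 α} {X : Finset E} {e₀ : E}
    (he₀ : e₀ ∈ X) {a b : α} (hab : a ≠ b) (hends : ends e₀ = s(a, b))
    (h : ∑ e ∈ X, edgeBoundary (ends e) = 0) :
    ∃ e₁ ∈ X, e₁ ≠ e₀ ∧ ∃ c, ends e₁ = s(a, c) := by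
  classical
  by_contra! hnone
  have ha : ∑ e ∈ X, edgeBoundary (ends e) a = 1 := by
    rw [Finset.sum_eq_single_of_mem e₀ he₀ fun e he hne => by
      by_contra h0
      obtain ⟨c, hc⟩ := exists_eq_of_edgeBoundary_apply_ne_zero h0
      exact hnone e he hne c hc]
    simp [hends, hab.symm]
  rw [← Finsupp.finsetSum_apply, h] at ha
  exact zero_ne_one ha

theorem exists_arcs_of_subdivision {a b c : α} {p : α × α} (hp : s(p.1, p.2) = s(b, c)) :
    ∃ p₀ p₁ : α × α, s(p₀.1, p₀.2) = s(a, b) ∧ s(p₁.1, p₁.2) = s(a, c) ∧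
      arcBoundary p₀ + arcBoundary p₁ = arcBoundary p := by
  obtain ⟨hb, hc⟩ | ⟨hc, hb⟩ := Sym2.eq_iff.1 hp
  · exact ⟨(b, a), (a, c), Sym2.eq_swap, rfl, by simp [arcBoundary, hb, hc]⟩
  · exact ⟨(a, b), (c, a), rfl, Sym2.eq_swap, by simp [arcBoundary, hb, hc]⟩

theorem arcBoundary_eq_zero_of_loop {a : α} {p : α × α} (hp : s(p.1, p.2) = s(a, a)) :
    arcBoundary p = 0 := by
  obtain ⟨h₁, h₂⟩ | ⟨h₁, h₂⟩ := Sym2.eq_iff.1 hp <;> rw [arcBoundary, h₁, h₂, sub_self]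

theorem sum_eq_add_add_sum_erase_erase {M : Type*} [AddCommMonoid M] [DecidableEq E]
    {X : Finset E} {e₀ e₁ : E} (he₀ : e₀ ∈ X) (he₁ : e₁ ∈ X) (hne : e₁ ≠ e₀) (g : E → M) :
    ∑ e ∈ X, g e = g e₀ + g e₁ + ∑ e ∈ (X.erase e₁).erase e₀, g e := by
  rw [add_comm (g e₀), add_assoc, Finset.add_sum_erase _ _ (Finset.mem_erase.2 ⟨hne.symm, he₀⟩),
    Finset.add_sum_erase _ _ he₁]

theorem exists_orientation_of_merged [DecidableEq E] {ends : E → Sym2 α} {X : Finset E} {e₀ e₁ : E}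
    (he₀ : e₀ ∈ X) (he₁ : e₁ ∈ X) (hne : e₁ ≠ e₀) {a b c : α} (hab : ends e₀ = s(a, b))
    (hac : ends e₁ = s(a, c)) {D : E → α × α}
    (hD : ∀ e, s((D e).1, (D e).2) = Function.update ends e₀ s(b, c) e)
    (hsum : ∑ e ∈ X.erase e₁, arcBoundary (D e) = 0) : ∃ D' : E → α × α,
      (∀ e, s((D' e).1, (D' e).2) = ends e) ∧ ∑ e ∈ X, arcBoundary (D' e) = 0 := by
  obtain ⟨p₀, p₁, hp₀, hp₁, hp⟩ :=
    exists_arcs_of_subdivision (a := a) ((hD e₀).trans (Function.update_self ..))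
  refine ⟨Function.update (Function.update D e₁ p₁) e₀ p₀, fun e => ?_, ?_⟩
  · by_cases h₀ : e = e₀
    · rw [h₀, Function.update_self, hp₀, hab]
    rw [Function.update_of_ne h₀]
    by_cases h₁ : e = e₁
    · rw [h₁, Function.update_self, hp₁, hac]
    rw [Function.update_of_ne h₁, hD, Function.update_of_ne h₀]
  · rw [sum_eq_add_add_sum_erase_erase he₀ he₁ hne, Function.update_self,
      Function.update_of_ne hne, Function.update_self, hp, ← hsum,
      ← Finset.add_sum_erase _ _ (Finset.mem_erase.2 ⟨hne.symm, he₀⟩)]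
    refine congrArg _ (Finset.sum_congr rfl fun e he => ?_)
    obtain ⟨h₀, h₁, -⟩ := by simpa only [Finset.mem_erase] using he
    rw [Function.update_of_ne h₀, Function.update_of_ne h₁]

/-- Two edges `ab` and `ac` are merged into a single edge `bc`, whose orientation is then passed
back through `a`. -/
theorem exists_orientation_sum_arcBoundary_eq_zero (X : Finset E) : ∀ ends : E → Sym2 α,
    ∑ e ∈ X, edgeBoundary (ends e) = 0 → ∃ D : E → α × α,
      (∀ e, s((D e).1, (D e).2) = ends e) ∧ ∑ e ∈ X, arcBoundary (D e) = 0 := by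
  classical
  induction X using Finset.strongInduction with
  | H X ih =>
  intro ends hsum
  obtain rfl | ⟨e₀, he₀⟩ := X.eq_empty_or_nonempty
  · exact ⟨fun e => (ends e).out, fun e => Quot.out_eq (ends e), Finset.sum_empty⟩
  obtain ⟨a, b, hab⟩ : ∃ a b, ends e₀ = s(a, b) :=
    ⟨(ends e₀).out.1, (ends e₀).out.2, (Quot.out_eq (ends e₀)).symm⟩
  obtain rfl | hloop := eq_or_ne a b
  · rw [← Finset.add_sum_erase X _ he₀, hab, edgeBoundary_diag, zero_add] at hsum
    obtain ⟨D, hD, hDsum⟩ := ih _ (Finset.erase_ssubset he₀) ends hsum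
    refine ⟨D, hD, ?_⟩
    rw [← Finset.add_sum_erase X _ he₀, hDsum, arcBoundary_eq_zero_of_loop ((hD e₀).trans hab),
      add_zero]
  · obtain ⟨e₁, he₁, hne, c, hac⟩ := exists_other_of_sum_edgeBoundary_eq_zero he₀ hloop hab hsum
    obtain ⟨D, hD, hDsum⟩ := ih _ (Finset.erase_ssubset he₁) (Function.update ends e₀ s(b, c)) (by
      rw [← Finset.add_sum_erase _ _ (Finset.mem_erase.2 ⟨hne.symm, he₀⟩), Function.update_self,
        Finset.sum_congr rfl fun e he => by rw [Function.update_of_ne (Finset.ne_of_mem_erase he)],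
        ← edgeBoundary_add_edgeBoundary a, ← hab, ← hac, ← hsum,
        sum_eq_add_add_sum_erase_erase he₀ he₁ hne])
    exact exists_orientation_of_merged he₀ he₁ hne hab hac hD hDsum

end Boundary

namespace Multigraph

section Flows

variable {G : Multigraph}

noncomputable instance instFintypeEdge (G : Multigraph) : Fintype G.E := Fintype.ofFinite G.E

/-- The boundary map of the cycle space modulo `2`. Edge sets are encoded by their indicator
functions `G.E → ZMod 2`, and the cycles are the elements of its kernel. -/
noncomputable def boundary (G : Multigraph) : (G.E → ZMod 2) →ₗ[ZMod 2] (G.V →₀ ZMod 2) :=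
  Fintype.linearCombination (ZMod 2) fun e => edgeBoundary (G.ends e)

theorem boundary_apply (x : G.E → ZMod 2) : G.boundary x = ∑ e, x e • edgeBoundary (G.ends e) :=
  rfl

open Classical in
theorem boundary_single (e : G.E) (c : ZMod 2) :
    G.boundary (Pi.single e c) = c • edgeBoundary (G.ends e) :=
  Fintype.linearCombination_apply_single ..

/-- The net outflow of an integral edge function, for the orientation `D`. -/
noncomputable def intBoundary (D : G.E → G.V × G.V) : (G.E → ℤ) →ₗ[ℤ] (G.V →₀ ℤ) :=
  Fintype.linearCombination ℤ fun e => arcBoundary (D e)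

theorem intBoundary_apply (D : G.E → G.V × G.V) (f : G.E → ℤ) :
    intBoundary D f = ∑ e, f e • arcBoundary (D e) := rfl

theorem intBoundary_eq_zero_iff {D : G.E → G.V × G.V} {f : G.E → ℤ} :
    intBoundary D f = 0 ↔ ∀ v : G.V, (∑ᶠ e ∈ {e : G.E | (D e).1 = v}, f e) =
      ∑ᶠ e ∈ {e : G.E | (D e).2 = v}, f e := by
  classical
  simp only [Finsupp.ext_iff, finsum_eq_sum_of_fintype, finsum_eq_if, Set.mem_ofPred_eq,
    intBoundary_apply, Finsupp.finsetSum_apply, arcBoundary,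
    Finsupp.coe_smul, Finsupp.coe_sub, Pi.smul_apply, Pi.sub_apply, Finsupp.single_apply,
    Finsupp.coe_zero, Pi.zero_apply, smul_eq_mul, mul_sub, mul_ite, mul_one, mul_zero,
    Finset.sum_sub_distrib, sub_eq_zero]

theorem isIntFlow_iff {k : ℕ} {D : G.E → G.V × G.V} {f : G.E → ℤ} :
    G.IsIntFlow k D f ↔ (∀ e, s((D e).1, (D e).2) = G.ends e) ∧ (∀ e, |f e| < k) ∧
      intBoundary D f = 0 := by
  rw [intBoundary_eq_zero_iff]; rfl

theorem boundary_intCast {D : G.E → G.V × G.V} (hD : ∀ e, s((D e).1, (D e).2) = G.ends e)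
    {f : G.E → ℤ} (hf : intBoundary D f = 0) : G.boundary (fun e => (f e : ZMod 2)) = 0 := by
  have hcast := congrArg (Finsupp.mapRange.addMonoidHom (Int.castAddHom (ZMod 2))) hf
  rw [map_zero, intBoundary_apply, map_sum] at hcast
  rw [boundary_apply, ← hcast]
  refine Finset.sum_congr rfl fun e _ => ?_
  rw [← hD, edgeBoundary_mk, map_zsmul, arcBoundary, map_sub]
  simp [ZModModule.sub_eq_add, Int.cast_smul_eq_zsmul]

theorem exists_isIntFlow_two {x : G.E → ZMod 2} (hx : G.boundary x = 0) {D : G.E → G.V × G.V}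
    (hD : ∀ e, s((D e).1, (D e).2) = G.ends e) :
    ∃ k, G.IsIntFlow 2 D k ∧ ∀ e, (k e : ZMod 2) = x e := by
  classical
  obtain ⟨D', hD', hsum⟩ := exists_orientation_sum_arcBoundary_eq_zero {e | x e ≠ 0} G.ends (by
    rw [← hx, boundary_apply, Finset.sum_filter]
    refine Finset.sum_congr rfl fun e _ => ?_
    split_ifs with hxe
    · rw [zmodTwo_eq_one_of_ne_zero hxe, one_smul]
    · rw [not_not.1 hxe, zero_smul])
  have hdir : ∀ e, ∃ ε : ℤ, |ε| = 1 ∧ arcBoundary (D' e) = ε • arcBoundary (D e) := fun e => by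
    rcases Sym2.eq_iff.1 ((hD' e).trans (hD e).symm) with ⟨h₁, h₂⟩ | ⟨h₁, h₂⟩
    · exact ⟨1, abs_one, by simp [arcBoundary, h₁, h₂]⟩
    · exact ⟨-1, by simp, by simp [arcBoundary, h₁, h₂]⟩
  choose ε hε hdir using hdir
  refine ⟨fun e => if x e ≠ 0 then ε e else 0, isIntFlow_iff.2 ⟨hD, fun e => ?_, ?_⟩, fun e => ?_⟩
  · split_ifs <;> simp [hε]
  · simp only [intBoundary_apply, ite_smul, zero_smul, ← hdir]
    rwa [← Finset.sum_filter]
  · dsimp only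
    split_ifs with hxe
    · rw [zmodTwo_eq_one_of_ne_zero hxe]
      rcases eq_or_eq_neg_of_abs_eq (hε e) with h | h <;> rw [h] <;> rfl
    · rw [not_not.1 hxe, Int.cast_zero]

/-- The cycles `x` and `y` modulo `2` together cover the edges in `S`. Such a pair encodes a
`4`-flow whose support contains `S`. -/
structure IsCoveringPair (S : Set G.E) (x y : G.E → ZMod 2) : Prop where
  fst : G.boundary x = 0
  snd : G.boundary y = 0
  ne_zero : ∀ e ∈ S, x e ≠ 0 ∨ y e ≠ 0

theorem IsCoveringPair.symm {S : Set G.E} {x y : G.E → ZMod 2} (h : IsCoveringPair S x y) :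
    IsCoveringPair S y x := ⟨h.snd, h.fst, fun e he => (h.ne_zero e he).symm⟩

/-- A `4`-flow `f` gives `x = f` modulo `2`; with `k` a `2`-flow congruent to `f`, it also gives
`y = (f + k) / 2` modulo `2`. -/
theorem IsIntFlow.exists_isCoveringPair {D : G.E → G.V × G.V} {f : G.E → ℤ}
    (hf : G.IsIntFlow 4 D f) : ∃ x y, IsCoveringPair (Function.support f) x y := by
  obtain ⟨hD, hlt, hf₀⟩ := isIntFlow_iff.1 hf
  obtain ⟨k, hk, hkf⟩ := exists_isIntFlow_two (boundary_intCast hD hf₀) hD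
  obtain ⟨-, hklt, hk₀⟩ := isIntFlow_iff.1 hk
  have heven : ∀ e, ∃ h : ℤ, f e + k e = 2 * h := fun e => by
    have hmod := (ZMod.intCast_eq_intCast_iff_dvd_sub _ _ 2).1 (hkf e)
    exact ⟨(f e + k e) / 2, by omega⟩
  choose h hh using heven
  have hh₀ : intBoundary D h = 0 := by
    have htwo : (2 : ℤ) • intBoundary D h = 0 := by
      rw [← map_smul, show (2 : ℤ) • h = f + k from (funext hh).symm, map_add, hf₀, hk₀, add_zero]
    exact (smul_eq_zero.1 htwo).resolve_left two_ne_zero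
  refine ⟨fun e => f e, fun e => h e, boundary_intCast hD hf₀, boundary_intCast hD hh₀,
    fun e he => ?_⟩
  by_contra! hzero
  have hf2 := (ZMod.intCast_zmod_eq_zero_iff_dvd _ 2).1 hzero.1
  have hh2 := (ZMod.intCast_zmod_eq_zero_iff_dvd _ 2).1 hzero.2
  have hflt := abs_lt.1 (hlt e)
  have hkelt := abs_lt.1 (hklt e)
  have hhe := hh e
  exact he (by push_cast at *; omega)

theorem exists_isIntFlow_four {x y : G.E → ZMod 2} (hx : G.boundary x = 0)
    (hy : G.boundary y = 0) :
    ∃ D f, G.IsIntFlow 4 D f ∧ ∀ e, f e = 0 ↔ x e = 0 ∧ y e = 0 := by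
  obtain ⟨D, hD⟩ : ∃ D : G.E → G.V × G.V, ∀ e, s((D e).1, (D e).2) = G.ends e :=
    ⟨fun e => (G.ends e).out, fun e => Quot.out_eq (G.ends e)⟩
  obtain ⟨k, hk, hkx⟩ := exists_isIntFlow_two hx hD
  obtain ⟨l, hl, hly⟩ := exists_isIntFlow_two hy hD
  obtain ⟨-, hklt, hk₀⟩ := isIntFlow_iff.1 hk
  obtain ⟨-, hllt, hl₀⟩ := isIntFlow_iff.1 hl
  refine ⟨D, k + (2 : ℤ) • l, isIntFlow_iff.2 ⟨hD, fun e => ?_, ?_⟩, fun e => ?_⟩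
  · have hke := abs_lt.1 (hklt e)
    have hle := abs_lt.1 (hllt e)
    rw [Pi.add_apply, Pi.smul_apply, smul_eq_mul, abs_lt]
    push_cast at *
    omega
  · rw [map_add, map_smul, hk₀, hl₀, smul_zero, add_zero]
  · have hke := abs_lt.1 (hklt e)
    have hle := abs_lt.1 (hllt e)
    rw [← hkx, ← hly, ZMod.intCast_zmod_eq_zero_iff_dvd, ZMod.intCast_zmod_eq_zero_iff_dvd,
      Pi.add_apply, Pi.smul_apply, smul_eq_mul]
    push_cast at *
    omega

end Flows

section PathsAndCuts

variable {G : Multigraph} {S : Set G.E}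

theorem Reaches.symm {u w : G.V} (h : G.Reaches S u w) : G.Reaches S w u :=
  haveI : Std.Symm fun a b => ∃ e ∈ S, G.ends e = s(a, b) :=
    ⟨fun _ _ ⟨e, he, hends⟩ => ⟨e, he, hends.trans Sym2.eq_swap⟩⟩
  Std.Symm.symm (r := Relation.ReflTransGen _) _ _ h

theorem Reaches.exists_boundary_eq {u w : G.V} (h : G.Reaches S u w) :
    ∃ P : G.E → ZMod 2, (∀ e ∉ S, P e = 0) ∧ G.boundary P = edgeBoundary s(u, w) := by
  classical
  induction h with
  | refl => exact ⟨0, fun _ _ => rfl, by rw [map_zero, edgeBoundary_diag]⟩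
  | @tail b c _ hbc ih =>
    obtain ⟨P, hP, hPb⟩ := ih
    obtain ⟨e, he, hends⟩ := hbc
    refine ⟨P + Pi.single e 1, fun e' he' => ?_, ?_⟩
    · rw [Pi.add_apply, hP e' he', Pi.single_eq_of_ne (ne_of_mem_of_not_mem he he').symm, add_zero]
    · rw [map_add, boundary_single, one_smul, hPb, hends, Sym2.eq_swap,
        edgeBoundary_add_edgeBoundary]

/-- The projection of the vertices of `G` to those of the contraction. -/
def contractVertex (S : Set G.E) : G.V → (G.contract S).V := Quot.mk _

/-- The edge of `G` from which an edge of the contraction arises. -/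
def contractEdge (S : Set G.E) : (G.contract S).E → G.E := Subtype.val

theorem contractVertex_surjective (S : Set G.E) : Function.Surjective (contractVertex S) :=
  Quot.mk_surjective

theorem contractEdge_injective (S : Set G.E) : Function.Injective (contractEdge S) :=
  Subtype.val_injective

theorem range_contractEdge (S : Set G.E) : Set.range (contractEdge S) = Sᶜ :=
  Subtype.range_val

theorem ends_contract (S : Set G.E) (e : (G.contract S).E) :
    (G.contract S).ends e = (G.ends (contractEdge S e)).map (contractVertex S) := rfl

theorem reaches_of_contractVertex_eq {u w : G.V} (h : contractVertex S u = contractVertex S w) :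
    G.Reaches S u w := by
  induction Quot.eqvGen_exact h with
  | rel a b hab => exact Relation.ReflTransGen.single hab
  | refl a => exact Relation.ReflTransGen.refl
  | symm a b hab ih => exact (ih (Quot.eqvGen_sound hab)).symm
  | trans a b c hab hbc ihab ihbc =>
    exact (ihab (Quot.eqvGen_sound hab)).trans (ihbc (Quot.eqvGen_sound hbc))

theorem mapDomain_boundary_extend (S : Set G.E) (g : (G.contract S).E → ZMod 2) :
    Finsupp.mapDomain (contractVertex S) (G.boundary (Function.extend (contractEdge S) g 0)) =
      (G.contract S).boundary g := by
  rw [boundary_apply, boundary_apply, Finsupp.mapDomain_finsetSum]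
  refine (Fintype.sum_of_injective (contractEdge S) (contractEdge_injective S) _ _
    (fun e he => ?_) fun e => ?_).symm
  · rw [Function.extend_apply' _ _ _ he, Pi.zero_apply, zero_smul, Finsupp.mapDomain_zero]
  · rw [(contractEdge_injective S).extend_apply, Finsupp.mapDomain_smul, ← edgeBoundary_map,
      ends_contract]

/-- The boundary of the extension of `g` by zero is moved along paths in `S` to one representative
of each contracted class, where it vanishes because `g` is a cycle. -/
theorem exists_cycle_extending (S : Set G.E) {g : (G.contract S).E → ZMod 2}
    (hg : (G.contract S).boundary g = 0) :
    ∃ x, G.boundary x = 0 ∧ ∀ e, x (contractEdge S e) = g e := by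
  let mk := contractVertex S
  let rep := Function.surjInv (contractVertex_surjective S)
  have hreach (v : G.V) : G.Reaches S v (rep (mk v)) :=
    reaches_of_contractVertex_eq (Function.surjInv_eq (contractVertex_surjective S) (mk v)).symm
  choose P hP hPb using fun v => (hreach v).exists_boundary_eq
  let correction := Finsupp.linearCombination (ZMod 2) P
  have hcorrection (d : G.V →₀ ZMod 2) :
      G.boundary (correction d) = d + Finsupp.mapDomain rep (Finsupp.mapDomain mk d) := by
    induction d using Finsupp.induction_linear with
    | zero => simp
    | add d d' hd hd' => simp only [map_add, hd, hd', Finsupp.mapDomain_add, add_add_add_comm]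
    | single v c => simp [correction, hPb, Finsupp.mapDomain_single]
  set g₀ : G.E → ZMod 2 := Function.extend (contractEdge S) g 0 with hg₀
  refine ⟨g₀ + correction (G.boundary g₀), ?_, fun e => ?_⟩
  · rw [map_add, hcorrection, ← add_assoc, ZModModule.add_self, zero_add,
      mapDomain_boundary_extend, hg, Finsupp.mapDomain_zero]
  · have heS : contractEdge S e ∉ S := (range_contractEdge S).subset ⟨e, rfl⟩
    have hzero : correction (G.boundary g₀) (contractEdge S e) = 0 := by
      simp [correction, Finsupp.linearCombination_apply, Finsupp.sum, hP _ _ heS]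
    rw [Pi.add_apply, hzero, add_zero, hg₀, (contractEdge_injective S).extend_apply]

theorem IsCoveringPair.exists_of_contract {T : Set (G.contract S).E}
    {x y : (G.contract S).E → ZMod 2} (h : IsCoveringPair T x y) :
    ∃ x' y', IsCoveringPair (contractEdge S '' T) x' y' := by
  obtain ⟨x', hx', hxx'⟩ := exists_cycle_extending S h.fst
  obtain ⟨y', hy', hyy'⟩ := exists_cycle_extending S h.snd
  refine ⟨x', y', hx', hy', ?_⟩
  rintro _ ⟨e, he, rfl⟩
  rw [hxx', hyy']
  exact h.ne_zero e he

theorem eq_of_boundary_eq_zero_of_cut {g : G.E → ZMod 2} (hg : G.boundary g = 0) (U : Set G.V)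
    {e₁ e₂ : G.E} (hne : e₁ ≠ e₂) {u₁ w₁ u₂ w₂ : G.V} (h₁ : G.ends e₁ = s(u₁, w₁))
    (h₂ : G.ends e₂ = s(u₂, w₂)) (hu₁ : u₁ ∈ U) (hw₁ : w₁ ∉ U) (hu₂ : u₂ ∈ U) (hw₂ : w₂ ∉ U)
    (hoff : ∀ e, e ≠ e₁ → e ≠ e₂ → g e ≠ 0 → ∀ u w, G.ends e = s(u, w) → (u ∈ U ↔ w ∈ U)) :
    g e₁ = g e₂ := by
  classical
  let crossing := Finsupp.linearCombination (ZMod 2) (U.indicator (1 : G.V → ZMod 2))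
  have hcrossing (e : G.E) {u w : G.V} (h : G.ends e = s(u, w)) :
      crossing (edgeBoundary (G.ends e)) = U.indicator 1 u + U.indicator 1 w := by
    simp [crossing, h]
  have hsum : ∑ e, g e * crossing (edgeBoundary (G.ends e)) = 0 := by
    simpa only [boundary_apply, map_sum, map_smul, smul_eq_mul, map_zero] using
      congrArg crossing hg
  rw [Fintype.sum_eq_add e₁ e₂ hne, hcrossing e₁ h₁, hcrossing e₂ h₂,
    Set.indicator_of_mem hu₁, Set.indicator_of_mem hu₂, Set.indicator_of_notMem hw₁,
    Set.indicator_of_notMem hw₂] at hsum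
  · simpa [CharTwo.add_eq_zero] using hsum
  · rintro e ⟨he₁, he₂⟩
    by_cases hge : g e = 0
    · rw [hge, zero_mul]
    obtain ⟨u, w, huw⟩ : ∃ u w, G.ends e = s(u, w) :=
      ⟨(G.ends e).out.1, (G.ends e).out.2, (Quot.out_eq (G.ends e)).symm⟩
    rw [hcrossing e huw]
    have hmem := hoff e he₁ he₂ hge u w huw
    by_cases hu : u ∈ U
    · simp [hu, hmem.1 hu, CharTwo.add_self_eq_zero]
    · simp [hu, mt hmem.2 hu]

end PathsAndCuts

section Circuits

variable {G : Multigraph} {C : Set G.E}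

theorem degIn_eq_ncard_add_ncard (S : Set G.E) {D : G.E → G.V × G.V}
    (hD : ∀ e, s((D e).1, (D e).2) = G.ends e) (v : G.V) :
    G.degIn S v = {e ∈ S | (D e).1 = v}.ncard + {e ∈ S | (D e).2 = v}.ncard := by
  rw [← Set.ncard_union_add_ncard_inter, degIn]
  have hloop : {e ∈ S | (D e).1 = v} ∩ {e ∈ S | (D e).2 = v} = {e ∈ S | G.ends e = s(v, v)} := by
    ext e
    simp only [Set.mem_inter_iff, Set.mem_ofPred_eq, ← hD e, Sym2.eq_iff]
    tauto
  have hincident : {e ∈ S | (D e).1 = v} ∪ {e ∈ S | (D e).2 = v} =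
      {e ∈ S | v ∈ G.ends e ∧ ¬(G.ends e).IsDiag} ∪ {e ∈ S | G.ends e = s(v, v)} := by
    ext e
    simp only [Set.mem_union, Set.mem_ofPred_eq, ← hD e, Sym2.eq_iff, Sym2.mem_iff,
      Sym2.mk_isDiag_iff]
    grind
  have hdisjoint : Disjoint {e ∈ S | v ∈ G.ends e ∧ ¬(G.ends e).IsDiag}
      {e ∈ S | G.ends e = s(v, v)} :=
    Set.disjoint_left.2 fun e he he' => he.2.2 (he'.2 ▸ rfl)
  rw [hincident, hloop, Set.ncard_union_eq hdisjoint, add_assoc, ← two_mul]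
  rfl

open Classical in
theorem sum_arcBoundary_apply (S : Set G.E) (D : G.E → G.V × G.V) (v : G.V) :
    (∑ e with e ∈ S, arcBoundary (D e)) v =
      ({e ∈ S | (D e).1 = v}.ncard : ℤ) - {e ∈ S | (D e).2 = v}.ncard := by
  simp [arcBoundary, Finsupp.single_apply, Set.ncard_eq_toFinset_card',
    Finset.sum_boole, Finset.filter_filter]

open Classical in
theorem sum_edgeBoundary_apply (S : Set G.E) (v : G.V) :
    (∑ e with e ∈ S, edgeBoundary (G.ends e)) v = G.degIn S v := by
  have hD (e : G.E) : s((G.ends e).out.1, (G.ends e).out.2) = G.ends e := Quot.out_eq (G.ends e)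
  rw [degIn_eq_ncard_add_ncard S hD, Finset.sum_congr rfl fun e _ => by rw [← hD e]]
  simp [Finsupp.single_apply, Set.ncard_eq_toFinset_card',
    Finset.sum_boole, Finset.filter_filter, Finset.sum_add_distrib]

open Classical in
theorem IsCircuit.sum_edgeBoundary_eq_zero (hC : G.IsCircuit C) :
    ∑ e with e ∈ C, edgeBoundary (G.ends e) = 0 := by
  ext v
  rw [sum_edgeBoundary_apply, Finsupp.coe_zero, Pi.zero_apply]
  by_cases hv : ∃ e ∈ C, v ∈ G.ends e
  · rw [hC.2.1 v hv]; rfl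
  · have hnone (p : G.E → Prop) (hp : ∀ e, p e → v ∈ G.ends e) : IsEmpty {e // e ∈ C ∧ p e} :=
      ⟨fun e => hv ⟨e, e.2.1, hp e e.2.2⟩⟩
    have h₁ := hnone (fun e => v ∈ G.ends e ∧ ¬(G.ends e).IsDiag) fun _ he => he.1
    have h₂ := hnone (fun e => G.ends e = s(v, v)) fun _ he => he ▸ Sym2.mem_mk_left v v
    rw [degIn, Nat.card_of_isEmpty, Nat.card_of_isEmpty, mul_zero, add_zero,
      Nat.cast_zero]

/-- A circuit with a cyclic orientation: distinct edges have distinct tails and distinct heads, and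
each head is a tail. -/
structure IsCyclicOrientation (C : Set G.E) (D : G.E → G.V × G.V) : Prop where
  ends_eq : ∀ e, s((D e).1, (D e).2) = G.ends e
  tail_injOn : Set.InjOn (fun e => (D e).1) C
  head_injOn : Set.InjOn (fun e => (D e).2) C
  exists_next : ∀ e ∈ C, ∃ e' ∈ C, (D e').1 = (D e).2

theorem IsCircuit.exists_isCyclicOrientation (hC : G.IsCircuit C) :
    ∃ D, IsCyclicOrientation C D := by
  classical
  obtain ⟨D, hD, hsum⟩ :=
    exists_orientation_sum_arcBoundary_eq_zero _ G.ends hC.sum_edgeBoundary_eq_zero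
  have hone (v : G.V) (hv : ∃ e ∈ C, v ∈ G.ends e) :
      {e ∈ C | (D e).1 = v}.ncard = 1 ∧ {e ∈ C | (D e).2 = v}.ncard = 1 := by
    have hdeg := hC.2.1 v hv
    have hbal := sum_arcBoundary_apply C D v
    rw [hsum, Finsupp.coe_zero, Pi.zero_apply] at hbal
    rw [degIn_eq_ncard_add_ncard C hD] at hdeg
    omega
  have htail (e : G.E) (he : e ∈ C) := (hone (D e).1 ⟨e, he, by simp [← hD]⟩).1
  have hhead (e : G.E) (he : e ∈ C) := hone (D e).2 ⟨e, he, by simp [← hD]⟩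
  refine ⟨D, hD, fun e he e' he' h => ?_, fun e he e' he' h => ?_, fun e he => ?_⟩
  · exact ((Set.ncard_le_one).1 (htail e he).le) e ⟨he, rfl⟩ e' ⟨he', h.symm⟩
  · exact ((Set.ncard_le_one).1 (hhead e he).2.le) e ⟨he, rfl⟩ e' ⟨he', h.symm⟩
  · exact (Set.ncard_pos).1 ((hhead e he).1.symm ▸ one_pos)

end Circuits

section CyclicListings

variable {G : Multigraph} {C : Set G.E} {D : G.E → G.V × G.V}

theorem IsCyclicOrientation.exists_perm (hD : IsCyclicOrientation C D) :
    ∃ π : Equiv.Perm C, ∀ e, (D (π e)).1 = (D e).2 := by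
  choose next hnextC hnext using hD.exists_next
  have hinj : Function.Injective fun e : C => (⟨next e e.2, hnextC e e.2⟩ : C) := fun e e' h => by
    refine Subtype.ext (hD.head_injOn e.2 e'.2 ?_)
    dsimp only
    rw [← hnext e e.2, ← hnext e' e'.2, Subtype.mk.inj h]
  exact ⟨Equiv.ofBijective _ (Finite.injective_iff_bijective.1 hinj), fun e => hnext e e.2⟩

theorem IsCyclicOrientation.sameCycle_of_reaches (hD : IsCyclicOrientation C D)
    {π : Equiv.Perm C} (hπ : ∀ e, (D (π e)).1 = (D e).2) (e₀ : C) {w : G.V}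
    (h : G.Reaches C (D e₀).1 w) : ∃ e : C, π.SameCycle e₀ e ∧ (D e).1 = w := by
  induction h with
  | refl => exact ⟨e₀, .refl π e₀, rfl⟩
  | @tail b c _ hbc ih =>
    obtain ⟨e, hsame, he⟩ := ih
    obtain ⟨a, ha, hends⟩ := hbc
    obtain ⟨htail, hhead⟩ | ⟨htail, hhead⟩ := Sym2.eq_iff.1 ((hD.ends_eq a).trans hends)
    · obtain rfl : e = ⟨a, ha⟩ := Subtype.ext (hD.tail_injOn e.2 ha (he.trans htail.symm))
      exact ⟨π ⟨a, ha⟩, Equiv.Perm.sameCycle_apply_right.2 hsame, (hπ _).trans hhead⟩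
    · obtain rfl : e = π ⟨a, ha⟩ :=
        Subtype.ext (hD.tail_injOn e.2 (π _).2 (he.trans (hhead.symm.trans (hπ ⟨a, ha⟩).symm)))
      exact ⟨⟨a, ha⟩, Equiv.Perm.sameCycle_apply_right.1 hsame, htail⟩

theorem IsCyclicOrientation.isCycleOn (hD : IsCyclicOrientation C D) (hC : G.IsCircuit C)
    {π : Equiv.Perm C} (hπ : ∀ e, (D (π e)).1 = (D e).2) :
    π.IsCycleOn Set.univ := by
  have htail (e : C) : ∃ a ∈ C, (D e).1 ∈ G.ends a :=
    ⟨e, e.2, hD.ends_eq e ▸ Sym2.mem_mk_left _ _⟩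
  refine ⟨Set.bijOn_univ.2 π.bijective, fun e _ e' _ => ?_⟩
  obtain ⟨e'', hsame, he''⟩ :=
    hD.sameCycle_of_reaches hπ e (hC.2.2 _ _ (htail e) (htail e'))
  rwa [← Subtype.ext (hD.tail_injOn e''.2 e'.2 he'')]

/-- The edges `a 0, …, a (N - 1)` of the circuit `C` in cyclic order, the edge `a t` having the
ends `v t` and `v (t + 1)`. -/
structure IsCyclicListing (C : Set G.E) (N : ℕ) (v : ℕ → G.V) (a : ℕ → G.E) : Prop where
  pos : 0 < N
  closed : v N = v 0
  edge_bijOn : Set.BijOn a (Set.Iio N) C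
  ends_eq : ∀ t, G.ends (a t) = s(v t, v (t + 1))

theorem IsCircuit.exists_isCyclicListing (hC : G.IsCircuit C) :
    ∃ N v a, IsCyclicListing C N v a := by
  classical
  obtain ⟨D, hD⟩ := hC.exists_isCyclicOrientation
  obtain ⟨π, hπ⟩ := hD.exists_perm
  have hcycle : π.IsCycleOn (Finset.univ : Finset C) :=
    Finset.coe_univ (α := C) ▸ hD.isCycleOn hC hπ
  obtain ⟨e₀, he₀⟩ := hC.1
  have hmem : (⟨e₀, he₀⟩ : C) ∈ (Finset.univ : Finset C) := Finset.mem_univ _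
  set N := (Finset.univ : Finset C).card
  let a (t : ℕ) : C := (π ^ t) ⟨e₀, he₀⟩
  have hclosed : a N = a 0 := hcycle.pow_card_apply hmem
  have hinj : Set.InjOn a (Set.Iio N) := fun t ht s hs hts =>
    Nat.ModEq.eq_of_lt_of_lt ((hcycle.pow_apply_eq_pow_apply hmem).1 hts) ht hs
  refine ⟨N, fun t => (D (a t)).1, fun t => a t, Finset.card_pos.2 ⟨_, hmem⟩,
    by rw [hclosed], ⟨fun t _ => (a t).2, fun t ht s hs hts => hinj ht hs (Subtype.ext hts),
      fun e he => ?_⟩, fun t => ?_⟩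
  · obtain ⟨t, ht, hte⟩ := hcycle.exists_pow_eq hmem (Finset.mem_univ ⟨e, he⟩)
    exact ⟨t, ht, congrArg Subtype.val hte⟩
  · have hsucc : a (t + 1) = π (a t) := by simp only [a, pow_succ', Equiv.Perm.mul_apply]
    rw [hsucc, hπ, hD.ends_eq]

end CyclicListings

section CircuitSwitching

variable {G : Multigraph} {C : Set G.E} {N : ℕ} {v : ℕ → G.V} {a : ℕ → G.E}

namespace IsCyclicListing

theorem ncard_sep (h : IsCyclicListing C N v a) (p : G.E → Prop) [DecidablePred p] :
    {e ∈ C | p e}.ncard = ((Finset.range N).filter fun t => p (a t)).card := by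
  have himage : {e ∈ C | p e} = a '' ((Finset.range N).filter fun t => p (a t)) := by
    ext e
    simp only [← h.edge_bijOn.image_eq, Set.mem_ofPred_eq, Set.mem_image, Set.mem_Iio,
      Finset.coe_filter, Finset.mem_range]
    grind
  rw [himage, (h.edge_bijOn.injOn.mono fun t ht =>
    Finset.mem_range.1 (Finset.mem_filter.1 ht).1).ncard_image, Set.ncard_coe_finset]

theorem ncard_eq (h : IsCyclicListing C N v a) : C.ncard = N := by
  simpa using h.ncard_sep fun _ => True

theorem exists_arc (h : IsCyclicListing C N v a) {i j : ℕ} (hij : i ≤ j) (hjN : j ≤ N) :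
    ∃ z : G.E → ZMod 2, G.boundary z = edgeBoundary s(v i, v j) ∧ (∀ e ∉ C, z e = 0) ∧
      ∀ t < N, z (a t) = if i ≤ t ∧ t < j then 1 else 0 := by
  classical
  induction j, hij using Nat.le_induction with
  | base => exact ⟨0, by rw [map_zero, edgeBoundary_diag], fun _ _ => rfl,
      fun t _ => (if_neg (by omega)).symm⟩
  | succ j hij ih =>
    obtain ⟨z, hz, hzC, hza⟩ := ih (Nat.le_of_succ_le hjN)
    refine ⟨z + Pi.single (a j) 1, ?_, fun e he => ?_, fun t ht => ?_⟩
    · rw [map_add, hz, boundary_single, one_smul, h.ends_eq, Sym2.eq_swap,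
        edgeBoundary_add_edgeBoundary]
    · rw [Pi.add_apply, hzC e he, zero_add,
        Pi.single_eq_of_ne (ne_of_mem_of_not_mem (h.edge_bijOn.mapsTo hjN) he).symm]
    · rw [Pi.add_apply, hza t ht, Pi.single_apply, h.edge_bijOn.injOn.eq_iff ht hjN]
      split_ifs <;> first | omega | simp

theorem exists_cycle_switching (h : IsCyclicListing C N v a) {S : Set G.E} (hS : Disjoint S C)
    {i j : ℕ} (hij : i ≤ j) (hjN : j ≤ N) (hR : G.Reaches S (v i) (v j)) :
    ∃ z : G.E → ZMod 2, G.boundary z = 0 ∧ (∀ e ∉ C, e ∉ S → z e = 0) ∧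
      ∀ t < N, z (a t) = if i ≤ t ∧ t < j then 1 else 0 := by
  obtain ⟨z, hz, hzC, hza⟩ := h.exists_arc hij hjN
  obtain ⟨P, hPS, hP⟩ := hR.exists_boundary_eq
  refine ⟨z + P, by rw [map_add, hz, hP, ZModModule.add_self], fun e heC heS => ?_, fun t ht => ?_⟩
  · rw [Pi.add_apply, hzC e heC, hPS e heS, add_zero]
  · rw [Pi.add_apply, hza t ht,
      hPS _ (hS.notMem_of_mem_right (h.edge_bijOn.mapsTo ht)), add_zero]

theorem eq_of_separated (h : IsCyclicListing C N v a) {y : G.E → ZMod 2} (hy : G.boundary y = 0)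
    {i j : ℕ} (hij : i < j) (hjN : j < N) (hsep : ∀ t s, i < t → t ≤ j → s < N →
      (s ≤ i ∨ j < s) → ¬G.Reaches {e | e ∉ C ∧ y e ≠ 0} (v t) (v s)) :
    y (a i) = y (a j) := by
  let U : Set G.V := {w | ∃ t, i < t ∧ t ≤ j ∧ G.Reaches {e | e ∉ C ∧ y e ≠ 0} (v t) w}
  have hU_of_lt (s : ℕ) (hs : s < N) : v s ∈ U ↔ i < s ∧ s ≤ j :=
    ⟨fun ⟨t, hit, htj, hts⟩ => by by_contra hsU; exact hsep t s hit htj hs (by omega) hts,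
      fun hsU => ⟨s, hsU.1, hsU.2, .refl⟩⟩
  have hU (s : ℕ) (hs : s ≤ N) : v s ∈ U ↔ i < s ∧ s ≤ j := by
    obtain rfl | hs := hs.eq_or_lt
    · rw [h.closed, hU_of_lt 0 h.pos]; omega
    · exact hU_of_lt s hs
  have hne : a i ≠ a j := fun hij' =>
    hij.ne (h.edge_bijOn.injOn (hij.trans hjN) hjN hij')
  refine eq_of_boundary_eq_zero_of_cut hy U hne ((h.ends_eq i).trans Sym2.eq_swap) (h.ends_eq j)
    ((hU _ (by omega)).2 (by omega)) (mt (hU _ (by omega)).1 (by omega))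
    ((hU _ (by omega)).2 (by omega)) (mt (hU _ (by omega)).1 (by omega))
    fun e hei hej hye u w huw => ?_
  by_cases he : e ∈ C
  · obtain ⟨t, ht : t < N, rfl⟩ := h.edge_bijOn.surjOn he
    have hti : t ≠ i := fun hti => hei (hti ▸ rfl)
    have htj : t ≠ j := fun htj => hej (htj ▸ rfl)
    have hside : v t ∈ U ↔ v (t + 1) ∈ U := by rw [hU t ht.le, hU (t + 1) ht]; omega
    obtain ⟨rfl, rfl⟩ | ⟨rfl, rfl⟩ := Sym2.eq_iff.1 ((h.ends_eq t).symm.trans huw)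
    exacts [hside, hside.symm]
  · exact ⟨fun ⟨t, hit, htj, hu⟩ => ⟨t, hit, htj, hu.tail ⟨e, ⟨he, hye⟩, huw⟩⟩,
      fun ⟨t, hit, htj, hw⟩ => ⟨t, hit, htj, hw.tail ⟨e, ⟨he, hye⟩, huw.trans Sym2.eq_swap⟩⟩⟩

theorem isSwitching (h : IsCyclicListing C N v a) {F : Type*} {x y : F → G.E → ZMod 2}
    (hpair : ∀ f, IsCoveringPair Cᶜ (x f) (y f))
    (hsurj : ∀ f x', IsCoveringPair Cᶜ x' (y f) → ∃ f', x f' = x' ∧ y f' = y f) :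
    IsSwitching N (fun f t => x f (a t)) (fun f t => y f (a t))
      (fun f i j => G.Reaches {e | e ∉ C ∧ y f e ≠ 0} (v i) (v j)) where
  symm _ _ _ hR := hR.symm
  exists_flip f i j hij hjN hR := by
    obtain ⟨z, hz, hzoff, hza⟩ :=
      h.exists_cycle_switching (Set.disjoint_left.2 fun e he => he.1) hij.le hjN.le hR
    obtain ⟨f', hx', hy'⟩ := hsurj f (x f + z) {
      fst := by rw [map_add, (hpair f).fst, hz, add_zero]
      snd := (hpair f).snd
      ne_zero e he := by
        by_cases hye : y f e = 0
        · rw [Pi.add_apply, hzoff e he fun heS => heS.2 hye, add_zero]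
          exact (hpair f).ne_zero e he
        · exact .inr hye }
    exact ⟨f', by simp only [hy'], by simp only [hy'], fun t ht => by
      rw [hx', Pi.add_apply, hza t ht]⟩
  eq_of_separated f _ _ hij hjN hsep := h.eq_of_separated (hpair f).snd hij hjN hsep

theorem exists_sum_zmodSign_ne_zero (h : IsCyclicListing C N v a) {x y : G.E → ZMod 2}
    (hxy : IsCoveringPair Cᶜ x y) : ∃ x' y', IsCoveringPair Cᶜ x' y' ∧
      ∑ t ∈ Finset.range N, zmodSign (x' (a t)) ≠ 0 := by
  let F := {p : (G.E → ZMod 2) × (G.E → ZMod 2) // IsCoveringPair Cᶜ p.1 p.2}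
  have : Nonempty F := ⟨⟨(x, y), hxy⟩⟩
  have h₁ := h.isSwitching (x := fun f : F => f.1.1) (y := fun f => f.1.2) (fun f => f.2)
    fun f x' hx' => ⟨⟨(x', f.1.2), hx'⟩, rfl, rfl⟩
  have h₂ := h.isSwitching (x := fun f : F => f.1.2) (y := fun f => f.1.1) (fun f => f.2.symm)
    fun f y' hy' => ⟨⟨(f.1.1, y'), hy'.symm⟩, rfl, rfl⟩
  obtain ⟨f, hf⟩ := h₁.exists_sum_zmodSign_ne_zero h₂ h.pos
  exact ⟨f.1.1, f.1.2, f.2, hf⟩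

end IsCyclicListing

theorem IsCircuit.boundary_indicator (hC : G.IsCircuit C) (c : ZMod 2) :
    G.boundary (C.indicator fun _ => c) = 0 := by
  classical
  rw [boundary_apply, ← smul_zero c, ← hC.sum_edgeBoundary_eq_zero, Finset.smul_sum,
    Finset.sum_filter]
  refine Finset.sum_congr rfl fun e _ => ?_
  rw [Set.indicator_apply, ite_smul, zero_smul]

/-- Adding constants along `C` turns the least frequent of the four pairs of values on `C` into
the pair `(0, 0)`. -/
theorem IsCoveringPair.exists_ncard_zero_lt (hC : G.IsCircuit C) {x y : G.E → ZMod 2}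
    (hxy : IsCoveringPair Cᶜ x y) : ∃ x' y', IsCoveringPair Cᶜ x' y' ∧
      4 * {e ∈ C | x' e = 0 ∧ y' e = 0}.ncard < C.ncard := by
  obtain ⟨N, v, a, h⟩ := hC.exists_isCyclicListing
  obtain ⟨x, y, hxy, hsum⟩ := h.exists_sum_zmodSign_ne_zero hxy
  obtain ⟨p, q, hpq⟩ :=
    exists_card_filter_lt_of_sum_zmodSign_ne_zero (Y := fun t => y (a t)) hsum
  refine ⟨x + C.indicator fun _ => p, y + C.indicator fun _ => q,
    ⟨by rw [map_add, hxy.fst, hC.boundary_indicator, add_zero],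
      by rw [map_add, hxy.snd, hC.boundary_indicator, add_zero], fun e he => ?_⟩, ?_⟩
  · simpa only [Pi.add_apply, Set.indicator_of_notMem he, add_zero] using hxy.ne_zero e he
  · have hzero : {e ∈ C | (x + C.indicator fun _ => p) e = 0 ∧ (y + C.indicator fun _ => q) e = 0} =
        {e ∈ C | x e = p ∧ y e = q} := by
      ext e
      refine and_congr_right fun he => ?_
      simp only [Pi.add_apply, Set.indicator_of_mem he, CharTwo.add_eq_zero]
    rw [hzero, h.ncard_sep, h.ncard_eq]
    rwa [Finset.card_range] at hpq

end CircuitSwitching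

end Multigraph

open Multigraph in
/-- Corollary 2.2, Fan's conjecture.  If `C` is a circuit of
`G` and `G/C` admits a nowhere-zero `4`-flow, then `G` admits a `4`-flow `f`
with `E(G) − E(C) ⊆ supp f` and `|E_{f=0}(C)| < |E(C)|/4`. -/
theorem circuit_contract_four_flow (G : Multigraph) (C : Set G.E)
    (hC : G.IsCircuit C)
    (hnz : ∃ (D' : (G.contract C).E → (G.contract C).V × (G.contract C).V)
      (f' : (G.contract C).E → ℤ),
      (G.contract C).IsIntFlow 4 D' f' ∧ ∀ e, f' e ≠ 0) :
    ∃ (D : G.E → G.V × G.V) (f : G.E → ℤ),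
      G.IsIntFlow 4 D f ∧
      (∀ e : G.E, e ∉ C → f e ≠ 0) ∧
      ({e ∈ C | f e = 0}.ncard : ℝ) < (1 / 4) * (C.ncard : ℝ) := by
  obtain ⟨D', f', hf', hf'₀⟩ := hnz
  obtain ⟨x', y', hxy'⟩ := hf'.exists_isCoveringPair
  obtain ⟨x₀, y₀, hxy₀⟩ := hxy'.exists_of_contract
  rw [Set.eq_univ_of_forall (s := Function.support f') hf'₀, Set.image_univ,
    range_contractEdge] at hxy₀
  obtain ⟨x, y, hxy, hlt⟩ := hxy₀.exists_ncard_zero_lt hC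
  obtain ⟨D, f, hf, hfxy⟩ := exists_isIntFlow_four hxy.fst hxy.snd
  refine ⟨D, f, hf, fun e he hfe => ?_, ?_⟩
  · exact (hxy.ne_zero e he).elim (· ((hfxy e).1 hfe).1) (· ((hfxy e).1 hfe).2)
  · simp only [hfxy]
    have hlt' : (4 * {e ∈ C | x e = 0 ∧ y e = 0}.ncard : ℝ) < C.ncard := mod_cast hlt
    linarith
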